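/- Let Γ be a Jordan curve in ℝ² and let T and T' be locally finite tilings of ℝ² such that R_{T'} > R_T and K_{T'} < L(Γ,T') ≤ L(Γ,T). Then L(Γ,T') ≤ 2 K_{T'} · (R_T / (R_{T'} − R_T)) · L(Γ,T). -/

import Mathlib

noncomputable section

/-- The Euclidean plane. -/
abbrev Plane : Type := EuclideanSpace ℝ (Fin 2)

/-- The closed unit ball of the plane. -/
def unitDisk : Set Plane := Metric.closedBall 0 1

/-- A tile is a closed subset of the plane homeomorphic to the closed unit ball. -/
def IsTile (t : Set Plane) : Prop := IsClosed t ∧ Nonempty (t ≃ₜ unitDisk)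

/-- A tiling of the plane: a countable collection of tiles covering the plane,
with pairwise disjoint interiors. -/
structure Tiling where
  tiles : Set (Set Plane)
  countable : tiles.Countable
  isTile : ∀ t ∈ tiles, IsTile t
  covers : ⋃₀ tiles = Set.univ
  disjInt : tiles.Pairwise fun t s => interior t ∩ interior s = ∅

/-- `rmin U` = sup of radii of closed balls contained in `U`. -/
def rmin (U : Set Plane) : ℝ :=
  sSup {r : ℝ | 0 < r ∧ ∃ x : Plane, Metric.closedBall x r ⊆ U}

/-- `r_T` : the infimum of `rmin` over the tiles. -/
def tilesr (C : Set (Set Plane)) : ℝ := sInf (rmin '' C)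

/-- `R_T` : the supremum of the diameters of tiles, divided by 2. -/
def tilesR (C : Set (Set Plane)) : ℝ := sSup (Metric.diam '' C) / 2

/-- A tiling is locally finite if `R_T < ∞` (i.e. diameters are bounded above)
and `r_T > 0`. -/
def LocFinite (C : Set (Set Plane)) : Prop := BddAbove (Metric.diam '' C) ∧ 0 < tilesr C

/-- `K_T = ⌊16 R_T² r_T⁻²⌋`. -/
def tK (C : Set (Set Plane)) : ℕ := ⌊16 * tilesR C ^ 2 / tilesr C ^ 2⌋₊

/-- `L(A, T)` : the number of tiles of `T` that intersect `A`. -/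
def tL (A : Set Plane) (C : Set (Set Plane)) : ℕ := {t ∈ C | (t ∩ A).Nonempty}.ncard

/-- A simple curve: the image of a continuous injective map from `[0,1]`. -/
def IsSimpleCurve (γ : Set Plane) : Prop :=
  ∃ f : Set.Icc (0:ℝ) 1 → Plane, Continuous f ∧ Function.Injective f ∧ γ = Set.range f

/-- A Jordan curve: the image of a continuous injective map from the circle `S¹`. -/
def IsJordanCurve (Γ : Set Plane) : Prop :=
  ∃ f : Metric.sphere (0 : Plane) 1 → Plane,
    Continuous f ∧ Function.Injective f ∧ Γ = Set.range f

/-!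
Only the connectedness of the curve matters. Put `δ = 2 R_T` and `ρ = R_{T'} - R_T`, so that
`2ρ + δ = 2 R_{T'}`.

* Comparing areas, at most `K_{T'}` tiles of `T'` meet a ball of radius `2ρ + δ`. As
  `L(Γ,T') > K_{T'}`, no such ball contains `Γ`, and `L(Γ,T')` is at most `K_{T'}` times the number
  of these balls needed to cover `Γ`.
* That number is at most the largest size of a set `S ⊆ Γ` of points more than `2ρ + δ` apart.
  Along `Γ` the distance to a given `p ∈ S` takes all values in `[0, ρ]`, and it varies by at most
  `δ` on a tile of `T`, so at least `ρ / δ` tiles of `T` meet the `ρ`-ball about `p`. Distinct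
  points of `S` use distinct tiles, whence `|S| ρ ≤ δ L(Γ,T)`.
-/

open MeasureTheory Metric Set
open scoped ENNReal NNReal

/-- The members of the family `𝒞` that meet `A`, whose number is the paper's `L(A, 𝒞)`. They are
kept as a set so that they can be counted by `Set.encard`, which, unlike the `Set.ncard` in `tL`,
does not send infinite families to `0`. -/
def membersMeeting {X : Type*} (𝒞 : Set (Set X)) (A : Set X) : Set (Set X) :=
  {t ∈ 𝒞 | (t ∩ A).Nonempty}

section Counting

variable {α ι : Type*}

theorem membersMeeting_subset (𝒞 : Set (Set α)) (A : Set α) : membersMeeting 𝒞 A ⊆ 𝒞 :=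
  sep_subset _ _

theorem membersMeeting_mono (𝒞 : Set (Set α)) {A B : Set α} (h : A ⊆ B) :
    membersMeeting 𝒞 A ⊆ membersMeeting 𝒞 B :=
  fun _ ht => ⟨ht.1, ht.2.mono (inter_subset_inter_right _ h)⟩

theorem membersMeeting_biUnion (𝒞 : Set (Set α)) (I : Set ι) (A : ι → Set α) :
    membersMeeting 𝒞 (⋃ i ∈ I, A i) = ⋃ i ∈ I, membersMeeting 𝒞 (A i) := by
  ext t
  simp only [membersMeeting, inter_iUnion, nonempty_iUnion, mem_iUnion, mem_ofPred_eq]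
  tauto

theorem subset_sUnion_membersMeeting {𝒞 : Set (Set α)} {A : Set α} (h : A ⊆ ⋃₀ 𝒞) :
    A ⊆ ⋃₀ membersMeeting 𝒞 A := by
  intro x hx
  obtain ⟨t, ht, hxt⟩ := h hx
  exact ⟨t, ⟨ht, x, hxt, hx⟩, hxt⟩

theorem encard_biUnion_le_encard_mul {I : Set ι} (hI : I.Finite) {s : ι → Set α} {K : ℕ∞}
    (hs : ∀ i ∈ I, (s i).encard ≤ K) : (⋃ i ∈ I, s i).encard ≤ I.encard * K := by
  lift I to Finset ι using hI
  calc (⋃ i ∈ I, s i).encard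
      ≤ ∑ i ∈ I, (s i).encard := I.set_encard_biUnion_le s
    _ ≤ ∑ _i ∈ I, K := Finset.sum_le_sum hs
    _ = (I : Set ι).encard * K := by
        rw [Finset.sum_const, nsmul_eq_mul, encard_coe_eq_coe_finsetCard]

theorem tsum_encard_le_encard {I : Set ι} {s : ι → Set α} {t : Set α} (hd : I.PairwiseDisjoint s)
    (hst : ∀ i ∈ I, s i ⊆ t) : ∑' i : I, ((s i).encard : ℝ≥0∞) ≤ t.encard := by
  let _ : MeasurableSpace α := ⊤
  simp only [← Measure.count_apply MeasurableSpace.measurableSet_top]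
  exact (tsum_meas_le_meas_iUnion_of_disjoint _ (fun _ => MeasurableSpace.measurableSet_top)
    hd.subtype).trans (measure_mono (iUnion_subset fun i => hst i i.2))

theorem le_floor_div_of_mul_ofReal_le {n : ℕ∞} {a b : ℝ} (ha : 0 < a) (hb : 0 ≤ b)
    (h : n * ENNReal.ofReal a ≤ ENNReal.ofReal b) : n ≤ ⌊b / a⌋₊ := by
  induction n using ENat.recTopCoe with
  | top => simp [ENNReal.top_mul (ENNReal.ofReal_pos.mpr ha).ne'] at h
  | coe n =>
    rw [ENat.toENNReal_coe, ← ENNReal.ofReal_natCast, ← ENNReal.ofReal_mul n.cast_nonneg,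
      ENNReal.ofReal_le_ofReal_iff hb] at h
    exact_mod_cast Nat.le_floor ((le_div_iff₀ ha).mpr h)

end Counting

section Metric

theorem ofReal_sub_le_encard_mul {ι : Type*} {I : Set ι} (hI : I.Countable) {s : ι → Set ℝ}
    {a b : ℝ} {δ : ℝ≥0∞} (hcov : Icc a b ⊆ ⋃ i ∈ I, s i) (hδ : ∀ i ∈ I, ediam (s i) ≤ δ) :
    ENNReal.ofReal (b - a) ≤ I.encard * δ :=
  calc ENNReal.ofReal (b - a) = volume (Icc a b) := Real.volume_Icc.symm
    _ ≤ ∑' i : I, volume (s i) := (measure_mono hcov).trans (measure_biUnion_le volume hI s)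
    _ ≤ ∑' _ : I, δ := ENNReal.tsum_le_tsum fun i => (Real.volume_le_diam _).trans (hδ i i.2)
    _ = I.encard * δ := ENNReal.tsum_set_const I δ

variable {X : Type*} {𝒞 : Set (Set X)} {Γ : Set X} {ρ δ : ℝ≥0}

theorem disjoint_membersMeeting_closedEBall [PseudoEMetricSpace X]
    (hδ : ∀ t ∈ 𝒞, ediam t ≤ δ) {p q : X} (hpq : 2 * ρ + δ < edist p q) :
    Disjoint (membersMeeting 𝒞 (closedEBall p ρ)) (membersMeeting 𝒞 (closedEBall q ρ)) := by
  refine disjoint_left.mpr ?_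
  rintro t ⟨ht, x, hxt, hxp⟩ ⟨-, y, hyt, hyq⟩
  refine hpq.not_ge ?_
  calc edist p q ≤ edist p x + edist x y + edist y q := edist_triangle4 p x y q
    _ ≤ ρ + δ + ρ := by
        gcongr
        · exact mem_closedEBall'.mp hxp
        · exact (edist_le_ediam_of_mem hxt hyt).trans (hδ t ht)
        · exact hyq
    _ = 2 * ρ + δ := by ring

theorem encard_membersMeeting_le_coveringNumber_mul [PseudoEMetricSpace X] {K : ℕ∞}
    (hK : ∀ p ∈ Γ, (membersMeeting 𝒞 (closedEBall p ρ)).encard ≤ K) :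
    (membersMeeting 𝒞 Γ).encard ≤ coveringNumber ρ Γ * K := by
  by_cases hfin : coveringNumber ρ Γ = ⊤
  · rcases eq_or_ne K 0 with rfl | hK0
    · have hempty : membersMeeting 𝒞 Γ = ∅ := by
        by_contra! ⟨t, ht, x, hxt, hx⟩
        have hball := encard_eq_zero.mp (nonpos_iff_eq_zero.mp (hK x hx))
        exact hball.subset ⟨ht, x, hxt, mem_closedEBall_self⟩
      simp [hempty]
    · simp [hfin, ENat.top_mul hK0]
  · obtain ⟨N, hNΓ, hNfin, hcov, hcard⟩ := exists_set_encard_eq_coveringNumber hfin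
    rw [← hcard]
    refine le_trans (encard_le_encard ?_)
      (encard_biUnion_le_encard_mul hNfin fun p hp => hK p (hNΓ hp))
    rw [← membersMeeting_biUnion]
    exact membersMeeting_mono 𝒞 (isCover_iff_subset_iUnion_closedEBall.mp hcov)

variable [PseudoMetricSpace X]

/-- The images of the members of `𝒞` under the distance to `p` cover the interval `[0, ρ]`. -/
theorem le_encard_mul_of_isPreconnected (hΓ : IsPreconnected Γ) {p q : X} (hp : p ∈ Γ) (hq : q ∈ Γ)
    (hpq : ρ ≤ edist p q) (h𝒞 : 𝒞.Countable) (hcov : Γ ∩ closedEBall p ρ ⊆ ⋃₀ 𝒞)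
    (hδ : ∀ t ∈ 𝒞, ediam t ≤ δ) : (ρ : ℝ≥0∞) ≤ 𝒞.encard * δ := by
  replace hpq : (ρ : ℝ) ≤ dist p q := by
    rwa [edist_nndist, ENNReal.coe_le_coe, ← NNReal.coe_le_coe, coe_nndist] at hpq
  have hcover : Icc 0 (ρ : ℝ) ⊆ ⋃ t ∈ 𝒞, dist p '' t := by
    intro a ⟨ha0, haρ⟩
    obtain ⟨x, hx, rfl⟩ := hΓ.intermediate_value hp hq (f := dist p) (by fun_prop)
      ⟨(dist_self p).trans_le ha0, haρ.trans hpq⟩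
    obtain ⟨t, ht, hxt⟩ := hcov ⟨hx, closedEBall_coe.symm.subset (mem_closedBall'.mpr haρ)⟩
    exact mem_biUnion ht (mem_image_of_mem _ hxt)
  have hdiam : ∀ t ∈ 𝒞, ediam (dist p '' t) ≤ δ := fun t ht =>
    ((LipschitzWith.dist_right p).ediam_image_le t).trans (by simpa using hδ t ht)
  simpa using ofReal_sub_le_encard_mul h𝒞 hcover hdiam

theorem encard_mul_le_of_isSeparated (hΓ : IsPreconnected Γ) (h𝒞 : 𝒞.Countable)
    (hcov : Γ ⊆ ⋃₀ 𝒞) (hδ : ∀ t ∈ 𝒞, ediam t ≤ δ) (hesc : ∀ p ∈ Γ, ∃ q ∈ Γ, ρ ≤ edist p q)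
    {S : Set X} (hSΓ : S ⊆ Γ) (hS : IsSeparated (2 * ρ + δ) S) :
    (S.encard : ℝ≥0∞) * ρ ≤ (membersMeeting 𝒞 Γ).encard * δ := by
  let near (p : X) : Set (Set X) := membersMeeting 𝒞 (Γ ∩ closedEBall p ρ)
  have hnear : ∀ p ∈ S, (ρ : ℝ≥0∞) ≤ (near p).encard * δ := by
    intro p hp
    obtain ⟨q, hq, hpq⟩ := hesc p (hSΓ hp)
    have hsub : near p ⊆ 𝒞 := membersMeeting_subset _ _
    exact le_encard_mul_of_isPreconnected hΓ (hSΓ hp) hq hpq (h𝒞.mono hsub)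
      (subset_sUnion_membersMeeting (inter_subset_left.trans hcov)) fun t ht => hδ t (hsub ht)
  have hdisj : S.PairwiseDisjoint near := fun p hp q hq hpq =>
    (disjoint_membersMeeting_closedEBall hδ (hS hp hq hpq)).mono
      (membersMeeting_mono 𝒞 inter_subset_right) (membersMeeting_mono 𝒞 inter_subset_right)
  calc (S.encard : ℝ≥0∞) * ρ
      = ∑' _ : S, (ρ : ℝ≥0∞) := (ENNReal.tsum_set_const S _).symm
    _ ≤ ∑' p : S, ((near p).encard : ℝ≥0∞) * δ := ENNReal.tsum_le_tsum fun p => hnear p p.2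
    _ = (∑' p : S, ((near p).encard : ℝ≥0∞)) * δ := ENNReal.tsum_mul_right
    _ ≤ (membersMeeting 𝒞 Γ).encard * δ := by
        gcongr
        exact tsum_encard_le_encard hdisj fun p _ => membersMeeting_mono 𝒞 inter_subset_left

theorem packingNumber_mul_le (hΓ : IsPreconnected Γ) (h𝒞 : 𝒞.Countable)
    (hcov : Γ ⊆ ⋃₀ 𝒞) (hδ : ∀ t ∈ 𝒞, ediam t ≤ δ) (hesc : ∀ p ∈ Γ, ∃ q ∈ Γ, ρ ≤ edist p q) :
    (packingNumber (2 * ρ + δ) Γ : ℝ≥0∞) * ρ ≤ (membersMeeting 𝒞 Γ).encard * δ := by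
  simp only [packingNumber, ENat.toENNReal_iSup, ENNReal.iSup_mul, iSup_le_iff]
  intro S hSΓ hS
  exact encard_mul_le_of_isSeparated hΓ h𝒞 hcov hδ hesc hSΓ (by simpa using hS)

theorem encard_membersMeeting_mul_le (hΓ : IsPreconnected Γ) (h𝒞 : 𝒞.Countable)
    (hcov : Γ ⊆ ⋃₀ 𝒞) (hδ : ∀ t ∈ 𝒞, ediam t ≤ δ) {𝒞' : Set (Set X)} {K : ℕ∞}
    (hball : ∀ p ∈ Γ, (membersMeeting 𝒞' (closedEBall p (2 * ρ + δ : ℝ≥0))).encard ≤ K)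
    (hK : K < (membersMeeting 𝒞' Γ).encard) :
    ((membersMeeting 𝒞' Γ).encard : ℝ≥0∞) * ρ ≤ K * ((membersMeeting 𝒞 Γ).encard * δ) := by
  have hesc : ∀ p ∈ Γ, ∃ q ∈ Γ, ρ ≤ edist p q := by
    intro p hp
    by_contra! hnear
    have hρ : ρ ≤ 2 * ρ + δ := le_add_right (le_mul_of_one_le_left ρ.2 one_le_two)
    have hsub : Γ ⊆ closedEBall p (2 * ρ + δ : ℝ≥0) := fun q hq =>
      mem_closedEBall'.mpr ((hnear q hq).le.trans (ENNReal.coe_le_coe.mpr hρ))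
    exact hK.not_ge ((encard_le_encard (membersMeeting_mono 𝒞' hsub)).trans (hball p hp))
  have hcount : (membersMeeting 𝒞' Γ).encard ≤ packingNumber (2 * ρ + δ) Γ * K :=
    (encard_membersMeeting_le_coveringNumber_mul hball).trans
      (mul_le_mul_left (coveringNumber_le_packingNumber _ Γ) K)
  calc ((membersMeeting 𝒞' Γ).encard : ℝ≥0∞) * ρ
      ≤ packingNumber (2 * ρ + δ) Γ * K * ρ := by
        gcongr
        exact_mod_cast hcount
    _ = K * (packingNumber (2 * ρ + δ) Γ * ρ) := by ring
    _ ≤ K * ((membersMeeting 𝒞 Γ).encard * δ) := by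
        gcongr (K : ℝ≥0∞) * ?_
        exact packingNumber_mul_le hΓ h𝒞 hcov hδ hesc

theorem ncard_membersMeeting_mul_le (hΓ : IsPreconnected Γ) (h𝒞 : 𝒞.Countable)
    (hcov : Γ ⊆ ⋃₀ 𝒞) (hδ : ∀ t ∈ 𝒞, ediam t ≤ δ) (hfin : (membersMeeting 𝒞 Γ).Finite)
    {𝒞' : Set (Set X)} {K : ℕ}
    (hball : ∀ p ∈ Γ, (membersMeeting 𝒞' (closedBall p (2 * ρ + δ))).encard ≤ K)
    (hK : K < (membersMeeting 𝒞' Γ).ncard) :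
    ((membersMeeting 𝒞' Γ).ncard : ℝ) * ρ ≤ K * ((membersMeeting 𝒞 Γ).ncard * δ) := by
  have hfin' : (membersMeeting 𝒞' Γ).Finite := finite_of_ncard_pos (pos_of_gt hK)
  have hball' : ∀ p ∈ Γ, (membersMeeting 𝒞' (closedEBall p (2 * ρ + δ : ℝ≥0))).encard ≤ K := by
    intro p hp
    rw [closedEBall_coe]
    exact_mod_cast hball p hp
  have h := encard_membersMeeting_mul_le hΓ h𝒞 hcov hδ hball'
    (hfin'.cast_ncard_eq ▸ Nat.cast_lt.mpr hK)
  simp only [← hfin.cast_ncard_eq, ← hfin'.cast_ncard_eq, ENat.toENNReal_coe,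
    ← ENNReal.coe_natCast] at h
  exact_mod_cast h

end Metric

section Volume

variable {E : Type*} [NormedAddCommGroup E] [NormedSpace ℝ E] [FiniteDimensional ℝ E]

open Module (finrank)

theorem encard_mul_pow_le_of_pairwiseDisjoint_ball {ι : Type*} {I : Set ι} {c : ι → E} {p : E}
    {r ρ : ℝ} (hr : 0 < r) (hρ : 0 ≤ ρ) (hd : I.PairwiseDisjoint fun i => ball (c i) r)
    (hsub : ∀ i ∈ I, ball (c i) r ⊆ closedBall p ρ) :
    I.encard * ENNReal.ofReal (r ^ finrank ℝ E) ≤ ENNReal.ofReal (ρ ^ finrank ℝ E) := by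
  let _ : MeasurableSpace E := borel E
  have : BorelSpace E := ⟨rfl⟩
  let μ : Measure E := Measure.addHaar
  have hμ : μ (ball 0 1) ≠ 0 := (measure_ball_pos μ 0 one_pos).ne'
  rw [← ENNReal.mul_le_mul_iff_left hμ measure_ball_lt_top.ne]
  calc I.encard * ENNReal.ofReal (r ^ finrank ℝ E) * μ (ball 0 1)
      = ∑' i : I, μ (ball (c i) r) := by
        simp only [Measure.addHaar_ball_of_pos μ _ hr, ENNReal.tsum_set_const, mul_assoc]
    _ ≤ μ (⋃ i : I, ball (c i) r) :=
        tsum_meas_le_meas_iUnion_of_disjoint μ (fun _ => measurableSet_ball) hd.subtype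
    _ ≤ μ (closedBall p ρ) := measure_mono (iUnion_subset fun i => hsub i i.2)
    _ = ENNReal.ofReal (ρ ^ finrank ℝ E) * μ (ball 0 1) := Measure.addHaar_closedBall μ p hρ

variable {𝒞 : Set (Set E)} {δ ρ : ℝ≥0}

theorem encard_membersMeeting_closedBall_mul_pow_le (hdisj : 𝒞.PairwiseDisjoint interior)
    (hδ : ∀ t ∈ 𝒞, ediam t ≤ δ) {r : ℝ} (hr : 0 < r) (hball : ∀ t ∈ 𝒞, ∃ x, ball x r ⊆ t)
    (p : E) :
    (membersMeeting 𝒞 (closedBall p ρ)).encard * ENNReal.ofReal (r ^ finrank ℝ E) ≤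
      ENNReal.ofReal (((ρ : ℝ) + δ) ^ finrank ℝ E) := by
  choose! c hc using hball
  refine encard_mul_pow_le_of_pairwiseDisjoint_ball (c := c) (p := p) hr (by positivity) ?_ ?_
  · exact fun t ht u hu htu => (hdisj ht.1 hu.1 htu).mono
      (interior_maximal (hc t ht.1) isOpen_ball) (interior_maximal (hc u hu.1) isOpen_ball)
  · rintro t ⟨ht, y, hyt, hyp⟩ x hx
    have hxy : dist x y ≤ δ := by
      rw [dist_nndist, NNReal.coe_le_coe, ← edist_le_coe]
      exact (edist_le_ediam_of_mem (hc t ht hx) hyt).trans (hδ t ht)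
    rw [mem_closedBall] at hyp ⊢
    linarith [dist_triangle x y p]

theorem encard_membersMeeting_closedBall_le_floor (hdisj : 𝒞.PairwiseDisjoint interior)
    (hδ : ∀ t ∈ 𝒞, ediam t ≤ δ) {r : ℝ} (hr : 0 < r)
    (hball : ∀ s ∈ Ioo 0 r, ∀ t ∈ 𝒞, ∃ x, ball x s ⊆ t) (p : E) :
    (membersMeeting 𝒞 (closedBall p ρ)).encard ≤ ⌊(((ρ : ℝ) + δ) / r) ^ finrank ℝ E⌋₊ := by
  have hrd : 0 < r ^ finrank ℝ E := pow_pos hr _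
  have hlim : Filter.Tendsto (fun s : ℝ => ENNReal.ofReal (s ^ finrank ℝ E))
      (nhdsWithin r (Iio r)) (nhds (ENNReal.ofReal (r ^ finrank ℝ E))) :=
    ((ENNReal.continuous_ofReal.comp (continuous_pow _)).tendsto r).mono_left nhdsWithin_le_nhds
  rw [div_pow]
  refine le_floor_div_of_mul_ofReal_le hrd (by positivity) (le_of_tendsto
    (ENNReal.Tendsto.const_mul hlim (Or.inl (ENNReal.ofReal_pos.mpr hrd).ne')) ?_)
  filter_upwards [Ioo_mem_nhdsLT hr] with s hs
  exact encard_membersMeeting_closedBall_mul_pow_le hdisj hδ hs.1 (hball s hs) p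

end Volume

section Plane

theorem IsJordanCurve.isPreconnected {Γ : Set Plane} (hΓ : IsJordanCurve Γ) :
    IsPreconnected Γ := by
  obtain ⟨f, hf, -, rfl⟩ := hΓ
  have hrank : 1 < Module.rank ℝ Plane := by
    rw [← Module.finrank_eq_rank, finrank_euclideanSpace, Fintype.card_fin]
    norm_num
  have : PreconnectedSpace (sphere (0 : Plane) 1) :=
    isPreconnected_iff_preconnectedSpace.mp (isPreconnected_sphere hrank 0 1)
  exact isPreconnected_range hf

theorem IsTile.isCompact {t : Set Plane} (ht : IsTile t) : IsCompact t := by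
  obtain ⟨-, ⟨e⟩⟩ := ht
  have : CompactSpace unitDisk := isCompact_iff_compactSpace.mp (isCompact_closedBall _ _)
  exact isCompact_iff_compactSpace.mpr e.symm.compactSpace

theorem tilesR_nonneg (C : Set (Set Plane)) : 0 ≤ tilesR C := by
  refine div_nonneg (Real.sSup_nonneg ?_) zero_le_two
  rintro _ ⟨t, -, rfl⟩
  exact diam_nonneg

theorem exists_closedBall_subset_of_lt_rmin {U : Set Plane} {s : ℝ} (hs0 : 0 ≤ s)
    (hs : s < rmin U) : ∃ x, closedBall x s ⊆ U := by
  have hne : {r : ℝ | 0 < r ∧ ∃ x : Plane, closedBall x r ⊆ U}.Nonempty := by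
    by_contra! hempty
    rw [rmin, hempty, Real.sSup_empty] at hs
    exact hs.not_ge hs0
  obtain ⟨r, ⟨-, x, hx⟩, hr⟩ := exists_lt_of_lt_csSup hne hs
  exact ⟨x, (closedBall_subset_closedBall hr.le).trans hx⟩

theorem tilesr_le_rmin {C : Set (Set Plane)} {t : Set Plane} (ht : t ∈ C) :
    tilesr C ≤ rmin t := by
  refine csInf_le ⟨0, ?_⟩ (mem_image_of_mem rmin ht)
  rintro _ ⟨u, -, rfl⟩
  exact Real.sSup_nonneg fun r hr => hr.1.le

namespace Tiling

variable (T : Tiling)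

theorem ediam_le (hT : LocFinite T.tiles) {t : Set Plane} (ht : t ∈ T.tiles) :
    ediam t ≤ (2 * tilesR T.tiles).toNNReal := by
  have hdiam : diam t ≤ 2 * tilesR T.tiles := by
    rw [tilesR, mul_div_cancel₀ _ two_ne_zero]
    exact le_csSup hT.1 (mem_image_of_mem diam ht)
  rw [← ENNReal.ofReal_toReal (T.isTile t ht).isCompact.isBounded.ediam_ne_top]
  exact ENNReal.ofReal_le_ofReal hdiam

theorem encard_membersMeeting_closedBall_le (hT : LocFinite T.tiles) (p : Plane) (ρ : ℝ≥0) :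
    (membersMeeting T.tiles (closedBall p ρ)).encard ≤
      ⌊((ρ + 2 * tilesR T.tiles) / tilesr T.tiles) ^ 2⌋₊ := by
  have hball : ∀ s ∈ Ioo 0 (tilesr T.tiles), ∀ t ∈ T.tiles, ∃ x, ball x s ⊆ t := by
    intro s hs t ht
    obtain ⟨x, hx⟩ :=
      exists_closedBall_subset_of_lt_rmin hs.1.le (hs.2.trans_le (tilesr_le_rmin ht))
    exact ⟨x, ball_subset_closedBall.trans hx⟩
  have hdisj : T.tiles.PairwiseDisjoint interior := T.disjInt.imp fun _ _ =>
    disjoint_iff_inter_eq_empty.mpr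
  simpa [tilesR_nonneg] using
    encard_membersMeeting_closedBall_le_floor (ρ := ρ) hdisj (fun _ => T.ediam_le hT) hT.2 hball p

theorem encard_membersMeeting_closedBall_le_tK (hT : LocFinite T.tiles) (p : Plane) :
    (membersMeeting T.tiles (closedBall p (2 * tilesR T.tiles))).encard ≤ tK T.tiles := by
  have hR := tilesR_nonneg T.tiles
  convert T.encard_membersMeeting_closedBall_le hT p (2 * tilesR T.tiles).toNNReal using 3
  · rw [Real.coe_toNNReal _ (by positivity)]
  · rw [tK, Real.coe_toNNReal _ (by positivity)]
    ring_nf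

theorem finite_membersMeeting (hT : LocFinite T.tiles) {A : Set Plane}
    (hA : Bornology.IsBounded A) : (membersMeeting T.tiles A).Finite := by
  obtain ⟨ρ, hρ⟩ := hA.subset_closedBall 0
  have hρ' : A ⊆ closedBall 0 ρ.toNNReal :=
    hρ.trans (closedBall_subset_closedBall (Real.le_coe_toNNReal ρ))
  exact (finite_of_encard_le_coe (T.encard_membersMeeting_closedBall_le hT 0 _)).subset
    (membersMeeting_mono _ hρ')

theorem subset_sUnion_tiles (A : Set Plane) : A ⊆ ⋃₀ T.tiles :=
  T.covers ▸ subset_univ A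

theorem isBounded_of_finite_membersMeeting {A : Set Plane}
    (hA : (membersMeeting T.tiles A).Finite) : Bornology.IsBounded A :=
  ((Bornology.isBounded_sUnion hA).mpr fun t ht => (T.isTile t ht.1).isCompact.isBounded).subset
    (subset_sUnion_membersMeeting (T.subset_sUnion_tiles A))

end Tiling

theorem tL_mul_le {Γ : Set Plane} (hΓ : IsPreconnected Γ) {T T' : Tiling}
    (hT : LocFinite T.tiles) (hT' : LocFinite T'.tiles)
    (hR : tilesR T.tiles ≤ tilesR T'.tiles) (hK : tK T'.tiles < tL Γ T'.tiles) :
    (tL Γ T'.tiles : ℝ) * (tilesR T'.tiles - tilesR T.tiles) ≤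
      tK T'.tiles * (tL Γ T.tiles * (2 * tilesR T.tiles)) := by
  have hfin' : (membersMeeting T'.tiles Γ).Finite := finite_of_ncard_pos (pos_of_gt hK)
  have hfin : (membersMeeting T.tiles Γ).Finite :=
    T.finite_membersMeeting hT (T'.isBounded_of_finite_membersMeeting hfin')
  have hρ := Real.coe_toNNReal _ (sub_nonneg.mpr hR)
  have hδ := Real.coe_toNNReal _ (mul_nonneg zero_le_two (tilesR_nonneg T.tiles))
  have hradius : 2 * (tilesR T'.tiles - tilesR T.tiles) + 2 * tilesR T.tiles =
      2 * tilesR T'.tiles := by ring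
  have h := ncard_membersMeeting_mul_le hΓ T.countable (T.subset_sUnion_tiles Γ)
    (fun _ => T.ediam_le hT) hfin (ρ := (tilesR T'.tiles - tilesR T.tiles).toNNReal)
    (fun p _ => by
      rw [hρ, hδ, hradius]
      exact T'.encard_membersMeeting_closedBall_le_tK hT' p) hK
  rwa [hρ, hδ] at h

theorem stmt_2_general {Γ : Set Plane} (hΓ : IsPreconnected Γ) {T T' : Tiling}
    (hT : LocFinite T.tiles) (hT' : LocFinite T'.tiles)
    (hR : tilesR T.tiles < tilesR T'.tiles) (hK : tK T'.tiles < tL Γ T'.tiles) :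
    (tL Γ T'.tiles : ℝ) ≤
      2 * (tK T'.tiles : ℝ) * (tilesR T.tiles / (tilesR T'.tiles - tilesR T.tiles)) *
        (tL Γ T.tiles : ℝ) := by
  have hpos : 0 < tilesR T'.tiles - tilesR T.tiles := sub_pos.mpr hR
  calc (tL Γ T'.tiles : ℝ)
      ≤ tK T'.tiles * (tL Γ T.tiles * (2 * tilesR T.tiles)) / (tilesR T'.tiles - tilesR T.tiles) :=
        (le_div_iff₀ hpos).mpr (tL_mul_le hΓ hT hT' hR.le hK)
    _ = _ := by ring

end Plane

/-- for a Jordan curve `Γ` and locally finite tilings `T, T'` with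
`R_{T'} > R_T` and `K_{T'} < L(Γ,T') ≤ L(Γ,T)`, one has
`L(Γ,T') ≤ 2 K_{T'} (R_T/(R_{T'} - R_T)) L(Γ,T)`. -/
theorem stmt_2 (Γ : Set Plane) (hΓ : IsJordanCurve Γ) (T T' : Tiling)
    (hT : LocFinite T.tiles) (hT' : LocFinite T'.tiles)
    (hR : tilesR T.tiles < tilesR T'.tiles)
    (hK : tK T'.tiles < tL Γ T'.tiles)
    (hL : tL Γ T'.tiles ≤ tL Γ T.tiles) :
    (tL Γ T'.tiles : ℝ) ≤
      2 * (tK T'.tiles : ℝ) * (tilesR T.tiles / (tilesR T'.tiles - tilesR T.tiles)) *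
        (tL Γ T.tiles : ℝ) :=
  stmt_2_general hΓ.isPreconnected hT hT' hR hK
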